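/- arXiv:2302.01587 — 3 statements merged into one kernel-verified Lean document; each statement's English description precedes it below -/
import Mathlib

section
/- Let G be a finite connected simple graph with n(G) ≥ 4. Then gp_e(G) = m(G) − 1 if and only if G belongs to the family 𝒢₁ ∪ 𝒢₂, where: 𝒢₁ consists of all graphs obtained from a graph H with diam(H) = 2 by attaching a pendant edge to a vertex u of H with deg_H(u) ≤ n(H) − 2; and 𝒢₂ consists of all graphs obtained from the disjoint union of graphs G₀, G₁, G₂ (not necessarily connected, with G₁ and G₂ nonempty) and an edge x₁x₂ by adding all edges between {x₁, x₂} and the vertices of G₀, all edges between x₁ and the vertices of G₁, and all edges between x₂ and the vertices of G₂. -/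
/-!
The equation `gp_e(G) = m(G) - 1` says that the whole edge set is not in general position while
the complement of some edge `e` is. The first
condition means that `G` has a geodesic of length three; the second, that `G` has diameter at most
three (a geodesic of length four would retain three edges after deleting `e`) and that every
geodesic of length three contains `e`. This is `egp_iff_criticalEdge`, where such an edge is called
critical.

Let `e = xy` be critical. If one end `v` of `e` is at distance three from some vertex, then `v`
must be a leaf, since a geodesic through another neighbour of `v` would avoid `e`; all distances in
`G - v` are then at most two because no geodesic has the leaf `v` as an inner vertex
(`CriticalEdge.pendantShape`), so `G` belongs to `𝒢₁`. Otherwise `e` is the middle edge of every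
geodesic of length three. Then every vertex is adjacent to `x` or `y`, and every private neighbour
of `x` is at distance three from every private neighbour of `y`; any edge between two of the
classes (adjacent to both, only to `x`, only to `y`) would give either a shortcut or a geodesic
avoiding `e` (`CriticalEdge.centralShape`), so `G` belongs to `𝒢₂`. Conversely, in both families
the distinguished edge is critical. The two families are handled through their intrinsic
descriptions `PendantShape` and `CentralShape` on the vertex set of `G`.
-/

/-- `X` is an edge general position set of `G`: `X` consists of edges of `G` and every
shortest path of `G` contains at most two edges of `X`. -/
def SimpleGraph.IsEdgeGPSet {V : Type*} (G : SimpleGraph V) (X : Set (Sym2 V)) : Prop :=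
  X ⊆ G.edgeSet ∧
    ∀ (u v : V) (p : G.Walk u v), p.IsPath → p.length = G.dist u v →
      (X ∩ {e | e ∈ p.edges}).ncard ≤ 2

/-- The edge general position number of `G`. -/
noncomputable def SimpleGraph.egp {V : Type*} (G : SimpleGraph V) : ℕ :=
  sSup {n | ∃ X : Set (Sym2 V), G.IsEdgeGPSet X ∧ X.ncard = n}
/-- The graph obtained from `H` by attaching a pendant edge at the vertex `u`. -/
def SimpleGraph.addPendant {V : Type*} (H : SimpleGraph V) (u : V) : SimpleGraph (Option V) :=
  SimpleGraph.fromRel (fun a b =>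
    match a, b with
    | some x, some y => H.Adj x y
    | some x, none => x = u
    | _, _ => False)

/-- The graph obtained from the disjoint union of `G₀`, `G₁`, `G₂` and an edge `x₁x₂`
(here `x₁ = Sum.inr true`, `x₂ = Sum.inr false`) by joining both `x₁` and `x₂` to all
vertices of `G₀`, joining `x₁` to all vertices of `G₁`, and joining `x₂` to all
vertices of `G₂`. -/
def centralEdgeJoin {V₀ V₁ V₂ : Type*} (G₀ : SimpleGraph V₀) (G₁ : SimpleGraph V₁)
    (G₂ : SimpleGraph V₂) : SimpleGraph ((V₀ ⊕ V₁ ⊕ V₂) ⊕ Bool) :=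
  SimpleGraph.fromRel (fun a b =>
    match a, b with
    | Sum.inl (Sum.inl x), Sum.inl (Sum.inl y) => G₀.Adj x y
    | Sum.inl (Sum.inr (Sum.inl x)), Sum.inl (Sum.inr (Sum.inl y)) => G₁.Adj x y
    | Sum.inl (Sum.inr (Sum.inr x)), Sum.inl (Sum.inr (Sum.inr y)) => G₂.Adj x y
    | Sum.inl (Sum.inl _), Sum.inr _ => True
    | Sum.inl (Sum.inr (Sum.inl _)), Sum.inr b => b = true
    | Sum.inl (Sum.inr (Sum.inr _)), Sum.inr b => b = false
    | Sum.inr _, Sum.inr _ => True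
    | _, _ => False)

/-- `G` belongs to the family `𝒢₁`: it is (isomorphic to) a graph obtained from a finite
graph `H` with `diam(H) = 2` by attaching a pendant edge at a vertex `u` of `H` with
`deg_H(u) ≤ n(H) - 2`. -/
def InFamilyG1 {V : Type*} (G : SimpleGraph V) : Prop :=
  ∃ (W : Type) (_ : Fintype W) (H : SimpleGraph W) (u : W),
    H.diam = 2 ∧ (H.neighborSet u).ncard ≤ Fintype.card W - 2 ∧
      Nonempty (G ≃g H.addPendant u)

/-- `G` belongs to the family `𝒢₂`: it is (isomorphic to) a central-edge join of finite
graphs `G₀`, `G₁`, `G₂` (not necessarily connected) with `G₁` and `G₂` nonempty. -/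
def InFamilyG2 {V : Type*} (G : SimpleGraph V) : Prop :=
  ∃ (W₀ W₁ W₂ : Type) (_ : Fintype W₀) (_ : Fintype W₁) (_ : Fintype W₂)
    (_ : Nonempty W₁) (_ : Nonempty W₂)
    (G₀ : SimpleGraph W₀) (G₁ : SimpleGraph W₁) (G₂ : SimpleGraph W₂),
    Nonempty (G ≃g centralEdgeJoin G₀ G₁ G₂)

/-- `a` and `b` are at distance at most two in `G` (in the same component). -/
def Near {V : Type*} (G : SimpleGraph V) (a b : V) : Prop :=
  a = b ∨ G.Adj a b ∨ ∃ z, G.Adj a z ∧ G.Adj z b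

/-- A critical edge `xy`: some two vertices are at distance three, none are further apart, and
every geodesic of length three passes through `xy`. A walk `a b c d` is a geodesic exactly when
`¬ Near G a d`. -/
structure CriticalEdge {V : Type*} (G : SimpleGraph V) (x y : V) : Prop where
  adj : G.Adj x y
  far : ∃ a b c d, G.Adj a b ∧ G.Adj b c ∧ G.Adj c d ∧ ¬ Near G a d
  diam_le : ∀ a d, Near G a d ∨ ∃ b c, G.Adj a b ∧ G.Adj b c ∧ G.Adj c d
  mem : ∀ a b c d, G.Adj a b → G.Adj b c → G.Adj c d → ¬ Near G a d →
    s(x, y) = s(a, b) ∨ s(x, y) = s(b, c) ∨ s(x, y) = s(c, d)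

/-- Intrinsic form of the family `𝒢₁`: `v` is a leaf attached at `u`, deleting `v` leaves a graph
in which all distances are at most two, and some other vertex is not adjacent to `u`. -/
structure PendantShape {V : Type*} (G : SimpleGraph V) (v u : V) : Prop where
  leaf : ∀ w, G.Adj v w ↔ w = u
  nonadj : ∃ y, y ≠ v ∧ y ≠ u ∧ ¬ G.Adj u y
  near : ∀ a b, a ≠ v → b ≠ v → Near G a b

/-- Intrinsic form of the family `𝒢₂`: the ends of the edge `x₁x₂` dominate the graph, both have
private neighbours, and adjacent vertices outside `{x₁, x₂}` have the same neighbours in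
`{x₁, x₂}`. -/
structure CentralShape {V : Type*} (G : SimpleGraph V) (x₁ x₂ : V) : Prop where
  adj : G.Adj x₁ x₂
  dom : ∀ w, w ≠ x₁ → w ≠ x₂ → G.Adj x₁ w ∨ G.Adj x₂ w
  left : ∃ a, a ≠ x₂ ∧ G.Adj x₁ a ∧ ¬ G.Adj x₂ a
  right : ∃ b, b ≠ x₁ ∧ G.Adj x₂ b ∧ ¬ G.Adj x₁ b
  same : ∀ a b, a ≠ x₁ → a ≠ x₂ → b ≠ x₁ → b ≠ x₂ → G.Adj a b →
    (G.Adj x₁ a ↔ G.Adj x₁ b) ∧ (G.Adj x₂ a ↔ G.Adj x₂ b)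

/-! ### Geodesics of length three -/

section Distances

variable {V : Type*} {G : SimpleGraph V}

theorem near_symm {a b : V} (h : Near G a b) : Near G b a := by
  rcases h with h | h | ⟨z, h, h'⟩
  · exact Or.inl h.symm
  · exact Or.inr (Or.inl h.symm)
  · exact Or.inr (Or.inr ⟨z, h'.symm, h.symm⟩)

theorem exists_walk_of_near {a b : V} (h : Near G a b) : ∃ p : G.Walk a b, p.length ≤ 2 := by
  rcases h with rfl | h | ⟨z, h, h'⟩
  · exact ⟨.nil, by simp⟩
  · exact ⟨.cons h .nil, by simp⟩
  · exact ⟨.cons h (.cons h' .nil), by simp⟩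

theorem near_of_walk {a b : V} (p : G.Walk a b) (hp : p.length ≤ 2) : Near G a b := by
  cases p with
  | nil => exact Or.inl rfl
  | cons h p =>
    cases p with
    | nil => exact Or.inr (Or.inl h)
    | cons h' p =>
      cases p with
      | nil => exact Or.inr (Or.inr ⟨_, h, h'⟩)
      | cons h'' p => simp at hp

theorem near_iff_dist_le (hG : G.Connected) {a b : V} : Near G a b ↔ G.dist a b ≤ 2 := by
  constructor
  · intro h
    obtain ⟨p, hp⟩ := exists_walk_of_near h
    exact (SimpleGraph.dist_le p).trans hp
  · intro h
    obtain ⟨p, hp⟩ := hG.exists_walk_length_eq_dist a b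
    exact near_of_walk p (by omega)

/-- The first three steps of a geodesic of length at least three form a geodesic. -/
theorem exists_far_of_walk {u v : V} (p : G.Walk u v) (hp : p.length = G.dist u v)
    (h3 : 3 ≤ p.length) :
    ∃ a b c d, G.Adj a b ∧ G.Adj b c ∧ G.Adj c d ∧ ¬ Near G a d := by
  cases p with
  | nil => simp at h3
  | cons h₁ p =>
    cases p with
    | nil => simp at h3
    | cons h₂ p =>
      cases p with
      | nil => simp at h3
      | cons h₃ p =>
        refine ⟨_, _, _, _, h₁, h₂, h₃, fun hn => ?_⟩
        obtain ⟨q, hq⟩ := exists_walk_of_near hn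
        have := SimpleGraph.dist_le (q.append p)
        simp at this hp
        omega

theorem ncard_edges {u v : V} (p : G.Walk u v) (hp : p.IsPath) :
    {e | e ∈ p.edges}.ncard = p.length := by
  classical
  rw [← p.length_edges, ← List.toFinset_card_of_nodup hp.isTrail.edges_nodup,
    ← Set.ncard_coe_finset]
  congr 1
  ext e
  simp

theorem three_le_of_not_near (hG : G.Connected) {a d : V} (h : ¬ Near G a d) :
    3 ≤ G.dist a d := by
  rw [near_iff_dist_le hG] at h
  omega

theorem walk_three_of_length_le {a d : V} (p : G.Walk a d) (hp : p.length ≤ 3) :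
    Near G a d ∨ ∃ b c, G.Adj a b ∧ G.Adj b c ∧ G.Adj c d := by
  cases p with
  | nil => exact Or.inl (Or.inl rfl)
  | cons h₁ p =>
    cases p with
    | nil => exact Or.inl (Or.inr (Or.inl h₁))
    | cons h₂ p =>
      cases p with
      | nil => exact Or.inl (Or.inr (Or.inr ⟨_, h₁, h₂⟩))
      | cons h₃ p =>
        cases p with
        | nil => exact Or.inr ⟨_, _, h₁, h₂, h₃⟩
        | cons h₄ p => simp at hp; omega

/-- If all edges but `e` are in general position, then geodesics have length at most three,
and those of length three contain `e`. -/
theorem length_le_of_gp {e : Sym2 V} (hX : G.IsEdgeGPSet (G.edgeSet \ {e})) {u v : V}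
    (p : G.Walk u v) (hp : p.length = G.dist u v) :
    p.length ≤ 3 ∧ (3 ≤ p.length → e ∈ p.edges) := by
  have hpath := p.isPath_of_length_eq_dist hp
  have h := hX.2 u v p hpath hp
  have heq : (G.edgeSet \ {e}) ∩ {e | e ∈ p.edges} = {e | e ∈ p.edges} \ {e} := by
    ext f
    have := @SimpleGraph.Walk.edges_subset_edgeSet V G u v p f
    simp only [Set.mem_inter_iff, Set.mem_sdiff, Set.mem_ofPred_eq, Set.mem_singleton_iff]
    tauto
  rw [heq] at h
  have hn := ncard_edges p hpath
  by_cases he : e ∈ p.edges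
  · have := Set.ncard_sdiff_singleton_of_mem (s := {e | e ∈ p.edges}) he
    exact ⟨by omega, fun _ => he⟩
  · rw [Set.sdiff_singleton_eq_self (by simpa using he)] at h
    exact ⟨by omega, fun _ => by omega⟩

end Distances

/-! ### Reduction to critical edges -/

section Reduction

variable {V : Type*} [Fintype V] {G : SimpleGraph V}

theorem egp_bddAbove : BddAbove {n | ∃ X : Set (Sym2 V), G.IsEdgeGPSet X ∧ X.ncard = n} := by
  refine ⟨G.edgeSet.ncard, ?_⟩
  rintro n ⟨X, hX, rfl⟩
  exact Set.ncard_le_ncard hX.1 (Set.toFinite _)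

theorem exists_egp (G : SimpleGraph V) : ∃ X, G.IsEdgeGPSet X ∧ X.ncard = G.egp := by
  have := Nat.sSup_mem (s := {n | ∃ X : Set (Sym2 V), G.IsEdgeGPSet X ∧ X.ncard = n})
    ⟨0, ∅, ⟨by simp, by simp⟩, by simp⟩ egp_bddAbove
  exact this

theorem ncard_le_egp {X : Set (Sym2 V)} (hX : G.IsEdgeGPSet X) : X.ncard ≤ G.egp :=
  le_csSup egp_bddAbove ⟨X, hX, rfl⟩

/-- The edge general position number is `m(G) - 1` exactly when `G` has a critical edge. -/
theorem egp_iff_criticalEdge (hG : G.Connected) (hm : 0 < G.edgeSet.ncard) :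
    G.egp = G.edgeSet.ncard - 1 ↔ ∃ x y, CriticalEdge G x y := by
  constructor
  · intro h
    obtain ⟨X, hX, hc⟩ := exists_egp G
    have hd := Set.ncard_sdiff hX.1 (Set.toFinite _)
    have h1 : (G.edgeSet \ X).ncard = 1 := by omega
    obtain ⟨e, he⟩ := Set.ncard_eq_one.1 h1
    have hXe : X = G.edgeSet \ {e} := by
      rw [← he, Set.sdiff_sdiff_cancel_left hX.1]
    subst hXe
    have hemem : e ∈ G.edgeSet := by
      have : e ∈ G.edgeSet \ (G.edgeSet \ {e}) := by rw [he]; rfl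
      exact this.1
    have hnot : ¬ G.IsEdgeGPSet G.edgeSet := fun hE => by
      have := ncard_le_egp hE
      omega
    induction e using Sym2.ind with
    | _ x y =>
    refine ⟨x, y, hemem, ?_, ?_, ?_⟩
    · by_contra hcon
      refine hnot ⟨subset_rfl, fun u v p hp hl => ?_⟩
      by_contra h2
      refine hcon (exists_far_of_walk p hl ?_)
      have := Set.ncard_le_ncard
        (Set.inter_subset_right (s := G.edgeSet) (t := {e | e ∈ p.edges})) (Set.toFinite _)
      rw [ncard_edges p hp] at this
      omega
    · intro a d
      obtain ⟨p, hp⟩ := hG.exists_walk_length_eq_dist a d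
      exact walk_three_of_length_le p (length_le_of_gp hX p hp).1
    · intro a b c d h1 h2 h3 hn
      let p : G.Walk a d := .cons h1 (.cons h2 (.cons h3 .nil))
      have hp : p.length = G.dist a d :=
        le_antisymm (three_le_of_not_near hG hn) (SimpleGraph.dist_le p)
      simpa [p] using (length_le_of_gp hX p hp).2 (by simp [p])
  · rintro ⟨x, y, hC⟩
    apply le_antisymm
    · obtain ⟨X, hX, hc⟩ := exists_egp G
      rw [← hc]
      by_contra hlt
      have hXE : X = G.edgeSet :=
        Set.eq_of_subset_of_ncard_le hX.1 (by omega) (Set.toFinite _)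
      subst hXE
      obtain ⟨a, b, c, d, h1, h2, h3, hn⟩ := hC.far
      let p : G.Walk a d := .cons h1 (.cons h2 (.cons h3 .nil))
      have hp : p.length = G.dist a d :=
        le_antisymm (three_le_of_not_near hG hn) (SimpleGraph.dist_le p)
      have hpath := p.isPath_of_length_eq_dist hp
      have h := hX.2 a d p hpath hp
      have hsub : {e | e ∈ p.edges} ⊆ G.edgeSet := fun f hf => p.edges_subset_edgeSet hf
      rw [Set.inter_eq_self_of_subset_right hsub, ncard_edges p hpath] at h
      simp [p] at h
    · have he : s(x, y) ∈ G.edgeSet := hC.adj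
      rw [← Set.ncard_sdiff_singleton_of_mem he]
      refine ncard_le_egp ⟨Set.sdiff_subset, fun u v p hp hl => ?_⟩
      have hle : ((G.edgeSet \ {s(x, y)}) ∩ {e | e ∈ p.edges}).ncard ≤
          ({e | e ∈ p.edges} \ {s(x, y)}).ncard :=
        Set.ncard_le_ncard (fun f hf => ⟨hf.2, hf.1.2⟩) (Set.toFinite _)
      refine hle.trans ?_
      have hn := ncard_edges p hp
      by_cases h2 : p.length ≤ 2
      · exact (Set.ncard_le_ncard Set.sdiff_subset (Set.toFinite _)).trans (by omega)
      have hmem : s(x, y) ∈ p.edges ∧ p.length ≤ 3 := by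
        have hnear : ¬ Near G u v := by rw [near_iff_dist_le hG]; omega
        have h3 : p.length ≤ 3 := by
          rcases hC.diam_le u v with h | ⟨b, c, h1, h2, h3⟩
          · exact absurd h hnear
          · exact hl.trans_le (SimpleGraph.dist_le (.cons h1 (.cons h2 (.cons h3 .nil))))
        refine ⟨?_, h3⟩
        cases p with
        | nil => simp at h2
        | cons h₁ p =>
          cases p with
          | nil => simp at h2
          | cons h₂ p =>
            cases p with
            | nil => simp at h2
            | cons h₃ p =>
              cases p with
              | nil => simpa using hC.mem _ _ _ _ h₁ h₂ h₃ hnear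
              | cons h₄ p => simp at h3; omega
      have := Set.ncard_sdiff_singleton_of_mem (s := {e | e ∈ p.edges}) hmem.1
      omega

end Reduction

/-! ### Graphs with a critical edge -/

section Structure

variable {V : Type*} {G : SimpleGraph V}

theorem CriticalEdge.symm {x y : V} (h : CriticalEdge G x y) : CriticalEdge G y x :=
  ⟨h.adj.symm, h.far, h.diam_le, by rw [Sym2.eq_swap]; exact h.mem⟩

/-- If an end `v` of a critical edge `vu` is at distance three from some vertex, then `v` is a leaf:
a geodesic starting at a second neighbour of `v` would avoid the edge `vu`. -/
theorem CriticalEdge.pendantShape {v u q : V} (h : CriticalEdge G v u)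
    (hn : ¬ Near G v q) : PendantShape G v u := by
  have hvu := h.adj
  have hvq : v ≠ q := fun e => hn (Or.inl e)
  have hvq' : ¬ G.Adj v q := fun e => hn (Or.inr (Or.inl e))
  have hcn : ∀ z, G.Adj v z → ¬ G.Adj z q := fun z h1 h2 => hn (Or.inr (Or.inr ⟨z, h1, h2⟩))
  have huq : u ≠ q := by rintro rfl; exact hvq' hvu
  have hleaf : ∀ w, G.Adj v w → w = u := by
    intro w hvw
    by_contra hwu
    have hwv := hvw.ne
    have hwq : w ≠ q := by rintro rfl; exact hvq' hvw
    rcases h.diam_le w q with (h1 | h1 | ⟨z, h1, h2⟩) | ⟨b, c, h1, h2, h3⟩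
    · exact hwq h1
    · exact hcn w hvw h1
    · have := h.mem v w z q hvw h1 h2 hn
      simp only [Sym2.eq_iff] at this
      grind
    · by_cases hnw : Near G w q
      · rcases hnw with h1 | h1 | ⟨z, h1, h2⟩
        · exact hwq h1
        · exact hcn w hvw h1
        · have := h.mem v w z q hvw h1 h2 hn
          simp only [Sym2.eq_iff] at this
          grind
      · have := h.mem w b c q h1 h2 h3 hnw
        simp only [Sym2.eq_iff] at this
        grind
  refine ⟨fun w => ⟨hleaf w, fun e => e ▸ hvu⟩, ⟨q, hvq.symm, huq.symm, hcn u hvu⟩, ?_⟩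
  intro a b ha hb
  by_contra hab
  rcases h.diam_le a b with h1 | ⟨c, d, h1, h2, h3⟩
  · exact hab h1
  · -- the geodesic `a c d b` would have the leaf `v` as an inner vertex
    have := h.mem a c d b h1 h2 h3 hab
    have e1 := hleaf a
    have e2 := hleaf b
    have e3 := hleaf c
    have e4 := hleaf d
    simp only [Sym2.eq_iff] at this
    grind [SimpleGraph.Adj.symm, SimpleGraph.Adj.ne, Near]

/-- Suppose a critical edge `xy` is the middle of a geodesic `a x y b`. Then every neighbour `c` of
`x` not adjacent to `y` is also at distance three from `b`: a shorter connection from `c` to `b`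
could be used, with `a x c` or with a path from `a`, to build a geodesic avoiding `xy`. -/
theorem CriticalEdge.not_near_of_middle {x y a b c : V} (h : CriticalEdge G x y)
    (hxa : G.Adj x a) (hyb : G.Adj y b) (hab : ¬ Near G a b)
    (hxc : G.Adj x c) (hcy : c ≠ y) (hyc : ¬ G.Adj y c) : ¬ Near G c b := by
  have hxy := h.adj
  have nab := hab
  simp only [Near, not_or, not_exists, not_and] at nab
  obtain ⟨n1, n2, n3⟩ := nab
  have key : ∀ z, G.Adj x z → z ≠ y → ¬ G.Adj z b := by
    intro z hz hzy hzb
    have := h.mem a x z b hxa.symm hz hzb hab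
    simp only [Sym2.eq_iff] at this
    grind [SimpleGraph.Adj.symm, SimpleGraph.Adj.ne]
  have avoid : ∀ z w, G.Adj a z → G.Adj z w → G.Adj w b → z = x ∧ w = y := by
    intro z w h1 h2 h3
    have := h.mem a z w b h1 h2 h3 hab
    simp only [Sym2.eq_iff] at this
    grind [SimpleGraph.Adj.symm, SimpleGraph.Adj.ne]
  rintro (rfl | hcb | ⟨z, hcz, hzb⟩)
  · exact n3 x hxa.symm hxc
  · exact key c hxc hcy hcb
  · have hzx : z ≠ x := by rintro rfl; exact n3 z hxa.symm hzb
    have hzy : z ≠ y := by rintro rfl; exact hyc hcz.symm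
    by_cases haz : Near G a z
    · rcases haz with rfl | haz | ⟨w, h1, h2⟩
      · exact n2 hzb
      · exact n3 z haz hzb
      · exact hzy (avoid w z h1 h2 hzb).2
    · have := h.mem a x c z hxa.symm hxc hcz haz
      simp only [Sym2.eq_iff] at this
      grind [SimpleGraph.Adj.symm, SimpleGraph.Adj.ne]

/-- If the ends of a critical edge are within distance two of every vertex, then the edge is the
middle edge of every geodesic of length three, and `G` is a central-edge join. -/
theorem CriticalEdge.centralShape {x y : V} (h : CriticalEdge G x y)
    (hx : ∀ q, Near G x q) (hy : ∀ q, Near G y q) : CentralShape G x y := by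
  have hxy := h.adj
  -- every geodesic of length three has the critical edge in the middle
  have hmid : ∀ a b c d, G.Adj a b → G.Adj b c → G.Adj c d → ¬ Near G a d →
      (b = x ∧ c = y) ∨ (b = y ∧ c = x) := by
    intro a b c d h1 h2 h3 hn
    have hn' : ¬ Near G d a := fun e => hn (near_symm e)
    have := h.mem a b c d h1 h2 h3 hn
    simp only [Sym2.eq_iff] at this
    have b1 := h1.symm
    have b2 := h2.symm
    have b3 := h3.symm
    grind
  obtain ⟨a, b, hxa, hyb, hab⟩ : ∃ a b, G.Adj x a ∧ G.Adj y b ∧ ¬ Near G a b := by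
    obtain ⟨a, b, c, d, h1, h2, h3, hn⟩ := h.far
    rcases hmid a b c d h1 h2 h3 hn with ⟨rfl, rfl⟩ | ⟨rfl, rfl⟩
    · exact ⟨a, d, h1.symm, h3, hn⟩
    · exact ⟨d, a, h3, h1.symm, fun e => hn (near_symm e)⟩
  have nab := hab
  simp only [Near, not_or, not_exists, not_and] at nab
  obtain ⟨n1, n2, n3⟩ := nab
  have hba : ¬ Near G b a := fun e => hab (near_symm e)
  have hay : a ≠ y := by rintro rfl; exact n2 hyb
  have hbx : b ≠ x := by rintro rfl; exact n2 hxa.symm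
  have hya : ¬ G.Adj y a := fun e => n3 y e.symm hyb
  have hxb : ¬ G.Adj x b := fun e => n3 x hxa.symm e
  have avoid : ∀ z w, G.Adj a z → G.Adj z w → G.Adj w b → z = x ∧ w = y := by
    intro z w h1 h2 h3
    rcases hmid a z w b h1 h2 h3 hab with e | ⟨rfl, rfl⟩
    · exact e
    · exact absurd h1.symm hya
  have hdom : ∀ w, w ≠ x → w ≠ y → G.Adj x w ∨ G.Adj y w := by
    intro w hwx hwy
    by_contra hcon
    rw [not_or] at hcon
    obtain ⟨hxw, hyw⟩ := hcon
    have hnear : ∀ t, Near G w t := by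
      intro t
      by_contra hnt
      rcases h.diam_le w t with e | ⟨b, c, h1, h2, h3⟩
      · exact hnt e
      · rcases hmid w b c t h1 h2 h3 hnt with ⟨rfl, rfl⟩ | ⟨rfl, rfl⟩
        · exact hxw h1.symm
        · exact hyw h1.symm
    rcases hnear b with rfl | hwb | ⟨d, hwd, hdb⟩
    · exact hyw hyb
    · rcases hnear a with rfl | hwa | ⟨c, hwc, hca⟩
      · exact hxw hxa
      · exact n3 w hwa.symm hwb
      · exact hwy (avoid c w hca.symm hwc.symm hwb).2
    · rcases hnear a with rfl | hwa | ⟨c, hwc, hca⟩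
      · exact hxw hxa
      · exact hwx (avoid w d hwa.symm hwd hdb).1
      · by_cases hcb : Near G c b
        · rcases hcb with rfl | hcb | ⟨z, h1, h2⟩
          · exact n2 hca.symm
          · exact n3 c hca.symm hcb
          · exact hxw ((avoid c z hca.symm h1 h2).1 ▸ hwc.symm)
        · rcases hmid c w d b hwc.symm hwd hdb hcb with e | e
          · exact hwx e.1
          · exact hwy e.1
  have hL : ∀ c, G.Adj x c → c ≠ y → ¬ G.Adj y c → ¬ Near G c b := fun c h1 h2 h3 =>
    h.not_near_of_middle hxa hyb hab h1 h2 h3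
  have hR : ∀ c d, G.Adj x c → c ≠ y → ¬ G.Adj y c → G.Adj y d → d ≠ x → ¬ G.Adj x d →
      ¬ Near G d c := fun c d h1 h2 h3 h4 h5 h6 =>
    h.symm.not_near_of_middle hyb h1 (fun e => hL c h1 h2 h3 (near_symm e)) h4 h5 h6
  refine ⟨hxy, hdom, ⟨a, hay, hxa, hya⟩, ⟨b, hbx, hyb, hxb⟩, ?_⟩
  have one : ∀ c d, c ≠ x → c ≠ y → d ≠ x → d ≠ y → G.Adj c d → G.Adj x c → G.Adj x d := by
    intro c d c1 c2 d1 d2 hcd hxc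
    by_contra hxd
    have hyd : G.Adj y d := (hdom d d1 d2).resolve_left hxd
    by_cases hyc : G.Adj y c
    · have := hR a d hxa hay hya hyd d1 hxd
      rcases hmid d c x a hcd.symm hxc.symm hxa this with e | e
      · exact c1 e.1
      · exact c2 e.1
    · exact hR c d hxc c2 hyc hyd d1 hxd (Or.inr (Or.inl hcd.symm))
  have two : ∀ c d, c ≠ x → c ≠ y → d ≠ x → d ≠ y → G.Adj c d → G.Adj y c → G.Adj y d := by
    intro c d c1 c2 d1 d2 hcd hyc
    by_contra hyd
    have hxd : G.Adj x d := (hdom d d1 d2).resolve_right hyd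
    by_cases hxc : G.Adj x c
    · have := hL d hxd d2 hyd
      rcases hmid d c y b hcd.symm hyc.symm hyb this with e | e
      · exact c1 e.1
      · exact c2 e.1
    · exact hR d c hxd d2 hyd hyc c1 hxc (Or.inr (Or.inl hcd))
  intro c d c1 c2 d1 d2 hcd
  exact ⟨⟨one c d c1 c2 d1 d2 hcd, one d c d1 d2 c1 c2 hcd.symm⟩,
    ⟨two c d c1 c2 d1 d2 hcd, two d c d1 d2 c1 c2 hcd.symm⟩⟩

theorem exists_shape_of_criticalEdge {x y : V} (h : CriticalEdge G x y) :
    (∃ v u, PendantShape G v u) ∨ ∃ x₁ x₂, CentralShape G x₁ x₂ := by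
  by_cases hx : ∀ q, Near G x q
  · by_cases hy : ∀ q, Near G y q
    · exact Or.inr ⟨x, y, h.centralShape hx hy⟩
    · obtain ⟨q, hn⟩ := not_forall.1 hy
      exact Or.inl ⟨y, x, h.symm.pendantShape hn⟩
  · obtain ⟨q, hn⟩ := not_forall.1 hx
    exact Or.inl ⟨x, y, h.pendantShape hn⟩

theorem PendantShape.criticalEdge {v u : V} (h : PendantShape G v u) : CriticalEdge G v u := by
  have hvu : G.Adj v u := (h.leaf u).2 rfl
  have huv : u ≠ v := hvu.ne'
  have hleaf := h.leaf
  have hleaf' : ∀ w, G.Adj w v ↔ w = u := fun w => by rw [G.adj_comm]; exact h.leaf w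
  have hdiam : ∀ d, d ≠ v → Near G v d ∨ ∃ b c, G.Adj v b ∧ G.Adj b c ∧ G.Adj c d := by
    intro d hd
    rcases h.near u d huv hd with rfl | h1 | ⟨z, h1, h2⟩
    · exact Or.inl (Or.inr (Or.inl hvu))
    · exact Or.inl (Or.inr (Or.inr ⟨u, hvu, h1⟩))
    · exact Or.inr ⟨u, z, hvu, h1, h2⟩
  refine ⟨hvu, ?_, ?_, ?_⟩
  · obtain ⟨y, hyv, hyu, huy⟩ := h.nonadj
    rcases h.near u y huv hyv with h1 | h1 | ⟨z, h1, h2⟩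
    · exact absurd h1.symm hyu
    · exact absurd h1 huy
    · refine ⟨v, u, z, y, hvu, h1, h2, ?_⟩
      rintro (e | e | ⟨w, e1, e2⟩)
      · exact hyv e.symm
      · exact hyu ((hleaf y).1 e)
      · rw [(hleaf w).1 e1] at e2
        exact huy e2
  · intro a d
    by_cases ha : a = v
    · subst ha
      by_cases hd : d = a
      · exact Or.inl (Or.inl hd.symm)
      · exact hdiam d hd
    · by_cases hd : d = v
      · subst hd
        rcases hdiam a ha with e | ⟨b, c, h1, h2, h3⟩
        · exact Or.inl (near_symm e)
        · exact Or.inr ⟨c, b, h3.symm, h2.symm, h1.symm⟩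
      · exact Or.inl (h.near a d ha hd)
  · intro a b c d h1 h2 h3 hn
    by_cases ha : a = v
    · subst ha
      rw [(hleaf b).1 h1]
      exact Or.inl rfl
    · by_cases hd : d = v
      · subst hd
        rw [(hleaf' c).1 h3, Sym2.eq_swap]
        exact Or.inr (Or.inr rfl)
      · exact absurd (h.near a d ha hd) hn

theorem CentralShape.criticalEdge {x y : V} (h : CentralShape G x y) : CriticalEdge G x y := by
  have hxy := h.adj
  have hdom := h.dom
  have hsame := h.same
  have hout : ∀ d, Near G x d ∧ Near G y d := by
    intro d
    by_cases d1 : d = x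
    · subst d1; exact ⟨Or.inl rfl, Or.inr (Or.inl hxy.symm)⟩
    by_cases d2 : d = y
    · subst d2; exact ⟨Or.inr (Or.inl hxy), Or.inl rfl⟩
    rcases hdom d d1 d2 with e | e
    · exact ⟨Or.inr (Or.inl e), Or.inr (Or.inr ⟨x, hxy.symm, e⟩)⟩
    · exact ⟨Or.inr (Or.inr ⟨y, hxy, e⟩), Or.inr (Or.inl e)⟩
  have hout' : ∀ a d, ¬ Near G a d → a ≠ x ∧ a ≠ y ∧ d ≠ x ∧ d ≠ y := by
    intro a d hn
    refine ⟨?_, ?_, ?_, ?_⟩ <;> rintro rfl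
    · exact hn (hout d).1
    · exact hn (hout d).2
    · exact hn (near_symm (hout a).1)
    · exact hn (near_symm (hout a).2)
  refine ⟨hxy, ?_, ?_, ?_⟩
  · obtain ⟨a, a1, a2, a3⟩ := h.left
    obtain ⟨b, b1, b2, b3⟩ := h.right
    have a4 := a2.ne'
    have b4 := b2.ne'
    refine ⟨a, x, y, b, a2.symm, hxy, b2, ?_⟩
    rintro (rfl | e | ⟨z, e1, e2⟩)
    · exact a3 b2
    · exact b3 ((hsame a b a4 a1 b1 b4 e).1.1 a2)
    · have z1 : z ≠ x := by rintro rfl; exact b3 e2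
      have z2 : z ≠ y := by rintro rfl; exact a3 e1.symm
      exact b3 ((hsame z b z1 z2 b1 b4 e2).1.1 ((hsame a z a4 a1 z1 z2 e1).1.1 a2))
  · intro a d
    by_contra hcon
    rw [not_or] at hcon
    obtain ⟨hn, hw⟩ := hcon
    obtain ⟨a1, a2, d1, d2⟩ := hout' a d hn
    rcases hdom a a1 a2 with ha | ha <;> rcases hdom d d1 d2 with hd | hd
    · exact hn (Or.inr (Or.inr ⟨x, ha.symm, hd⟩))
    · exact hw ⟨x, y, ha.symm, hxy, hd⟩
    · exact hw ⟨y, x, ha.symm, hxy.symm, hd⟩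
    · exact hn (Or.inr (Or.inr ⟨y, ha.symm, hd⟩))
  · intro a b c d h1 h2 h3 hn
    obtain ⟨a1, a2, d1, d2⟩ := hout' a d hn
    have hx : ¬ (G.Adj x a ∧ G.Adj x d) := fun e => hn (Or.inr (Or.inr ⟨x, e.1.symm, e.2⟩))
    have hy : ¬ (G.Adj y a ∧ G.Adj y d) := fun e => hn (Or.inr (Or.inr ⟨y, e.1.symm, e.2⟩))
    have da := hdom a a1 a2
    have dd := hdom d d1 d2
    have sab := hsame a b a1 a2
    have sbc := hsame b c
    have scd := hsame c d
    have h1' := h1.symm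
    have h2' := h2.symm
    have h3' := h3.symm
    clear hsame hdom hout hout' hn h
    simp only [Sym2.eq_iff]
    by_cases b1 : b = x
    · subst b1
      by_cases c2 : c = y <;> grind
    · by_cases b2 : b = y
      · subst b2
        by_cases c1 : c = x <;> grind
      · by_cases c1 : c = x
        · subst c1; grind
        · by_cases c2 : c = y
          · subst c2; grind
          · grind

end Structure

/-! ### The family of pendant extensions -/

section Pendant

variable {V : Type*} {G : SimpleGraph V}

theorem near_iso {W : Type*} {H : SimpleGraph W} (φ : G ≃g H) {a b : V}
    (h : Near H (φ a) (φ b)) : Near G a b := by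
  rcases h with h | h | ⟨z, h1, h2⟩
  · exact Or.inl (φ.injective h)
  · exact Or.inr (Or.inl (φ.map_adj_iff.1 h))
  · obtain ⟨z, rfl⟩ := φ.surjective z
    exact Or.inr (Or.inr ⟨z, φ.map_adj_iff.1 h1, φ.map_adj_iff.1 h2⟩)

theorem PendantShape.of_iso {W : Type*} {H : SimpleGraph W} (φ : G ≃g H) {v u : V}
    (h : PendantShape H (φ v) (φ u)) : PendantShape G v u := by
  refine ⟨fun w => ?_, ?_, fun a b ha hb => ?_⟩
  · rw [← φ.map_adj_iff, h.leaf, φ.injective.eq_iff]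
  · obtain ⟨y, h1, h2, h3⟩ := h.nonadj
    obtain ⟨y, rfl⟩ := φ.surjective y
    exact ⟨y, fun e => h1 (e ▸ rfl), fun e => h2 (e ▸ rfl), fun e => h3 (φ.map_adj_iff.2 e)⟩
  · exact near_iso φ (h.near _ _ (φ.injective.ne ha) (φ.injective.ne hb))

theorem addPendant_some_some (u x y : V) :
    (G.addPendant u).Adj (some x) (some y) ↔ G.Adj x y := by
  simp only [SimpleGraph.addPendant, SimpleGraph.fromRel_adj, ne_eq, Option.some.injEq]
  exact ⟨fun h => h.2.elim id fun e => e.symm, fun h => ⟨h.ne, Or.inl h⟩⟩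

theorem addPendant_some_none (u x : V) : (G.addPendant u).Adj (some x) none ↔ x = u := by
  simp [SimpleGraph.addPendant]

theorem addPendant_none_some (u x : V) : (G.addPendant u).Adj none (some x) ↔ x = u := by
  rw [SimpleGraph.adj_comm, addPendant_some_none]

theorem pendantShape_addPendant [Fintype V] (u : V) (hd : G.diam = 2)
    (hu : (G.neighborSet u).ncard ≤ Fintype.card V - 2) :
    PendantShape (G.addPendant u) none (some u) := by
  classical
  have hne : G.diam ≠ 0 := by omega
  have htop := SimpleGraph.ediam_ne_top_of_diam_ne_zero hne
  have : Nonempty V := ⟨u⟩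
  have hG := SimpleGraph.connected_of_ediam_ne_top htop
  have := SimpleGraph.nontrivial_of_diam_ne_zero hne
  have hcard : 1 < Fintype.card V := Fintype.one_lt_card
  refine ⟨?_, ?_, ?_⟩
  · rintro (_ | w)
    · simp
    · simp [addPendant_none_some]
  · have h1 : (insert u (G.neighborSet u)).ncard < (Set.univ : Set V).ncard := by
      have := Set.ncard_insert_le u (G.neighborSet u)
      rw [Set.ncard_univ, Nat.card_eq_fintype_card]
      omega
    obtain ⟨y, -, hy⟩ := Set.exists_mem_notMem_of_ncard_lt_ncard h1
    simp only [Set.mem_insert_iff, SimpleGraph.mem_neighborSet, not_or] at hy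
    exact ⟨some y, by simp, by simpa using hy.1, by simpa [addPendant_some_some] using hy.2⟩
  · rintro (_ | a) (_ | b) ha hb
    · exact absurd rfl ha
    · exact absurd rfl ha
    · exact absurd rfl hb
    · have : G.dist a b ≤ 2 := hd ▸ SimpleGraph.dist_le_diam htop
      rcases (near_iff_dist_le hG).2 this with rfl | h | ⟨z, h1, h2⟩
      · exact Or.inl rfl
      · exact Or.inr (Or.inl ((addPendant_some_some u a b).2 h))
      · exact Or.inr (Or.inr ⟨some z, (addPendant_some_some u a z).2 h1,
          (addPendant_some_some u z b).2 h2⟩)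

theorem diam_eq_two [Finite V] (hn : ∀ a b, Near G a b) {u y : V} (huy : u ≠ y)
    (hadj : ¬ G.Adj u y) : G.diam = 2 := by
  have : Nonempty V := ⟨u⟩
  have hG : G.Connected :=
    { preconnected := fun a b => let ⟨p, _⟩ := exists_walk_of_near (hn a b); ⟨p⟩ }
  apply le_antisymm
  · obtain ⟨a, b, hab⟩ := G.exists_dist_eq_diam
    rw [← hab]
    exact (near_iff_dist_le hG).1 (hn a b)
  · exact (hG.one_lt_dist_of_ne_of_not_adj huy hadj).trans_le
      (SimpleGraph.dist_le_diam (SimpleGraph.connected_iff_ediam_ne_top.1 hG))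

theorem PendantShape.inFamilyG1 [Fintype V] {v u : V} (h : PendantShape G v u) :
    InFamilyG1 G := by
  classical
  have hvu : G.Adj v u := (h.leaf u).2 rfl
  obtain ⟨y, hyv, hyu, huy⟩ := h.nonadj
  -- `Fin k` stands in for the complement of `v`, which may live in a higher universe
  let e := Fintype.equivFin {w // w ≠ v}
  let H := G.comap fun i => (e.symm i).1
  have hH : ∀ i j, H.Adj i j ↔ G.Adj (e.symm i).1 (e.symm j).1 := fun i j => Iff.rfl
  let u' := e ⟨u, hvu.ne'⟩
  let y' := e ⟨y, hyv⟩
  have hu' : (e.symm u').1 = u := by simp [u']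
  have hy' : (e.symm y').1 = y := by simp [y']
  have hu'y' : u' ≠ y' := fun he => hyu (by rw [← hu', ← hy', he])
  have hadj : ¬ H.Adj u' y' := by rw [hH, hu', hy']; exact huy
  have hnear : ∀ i j, Near H i j := by
    intro i j
    rcases h.near _ _ (e.symm i).2 (e.symm j).2 with h1 | h1 | ⟨z, h1, h2⟩
    · exact Or.inl (e.symm.injective (Subtype.ext h1))
    · exact Or.inr (Or.inl h1)
    · by_cases hz : z = v
      · subst hz
        have e1 := (h.leaf _).1 h1.symm
        have e2 := (h.leaf _).1 h2
        exact Or.inl (e.symm.injective (Subtype.ext (e1.trans e2.symm)))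
      · refine Or.inr (Or.inr ⟨e ⟨z, hz⟩, ?_, ?_⟩)
        · simpa [hH] using h1
        · simpa [hH] using h2
  refine ⟨_, inferInstance, H, u', diam_eq_two hnear hu'y' hadj, ?_, ?_⟩
  · have hsub : H.neighborSet u' ⊆ {u', y'}ᶜ := by
      intro w hw
      simp only [Set.mem_compl_iff, Set.mem_insert_iff, Set.mem_singleton_iff, not_or]
      exact ⟨SimpleGraph.Adj.ne' (G := H) hw, fun he => hadj (he ▸ hw)⟩
    have h1 := Set.ncard_le_ncard hsub (Set.toFinite _)
    rwa [Set.ncard_compl, Set.ncard_pair hu'y', Nat.card_eq_fintype_card] at h1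
  · let f : Option (Fin _) ≃ V := (Equiv.optionCongr e.symm).trans (Equiv.optionSubtypeNe v)
    have f0 : f none = v := rfl
    have f1 : ∀ i, f (some i) = (e.symm i).1 := fun i => rfl
    have hleaf : ∀ i, (e.symm i).1 = u ↔ i = u' := by
      intro i
      rw [← hu', Subtype.val_inj, e.symm.injective.eq_iff]
    refine ⟨SimpleGraph.Iso.symm ⟨f, ?_⟩⟩
    rintro (_ | i) (_ | j)
    · simp
    · rw [f0, f1, h.leaf, addPendant_none_some, hleaf]
    · rw [f0, f1, G.adj_comm, h.leaf, addPendant_some_none, hleaf]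
    · rw [f1, f1, addPendant_some_some, hH]

theorem InFamilyG1.exists_pendantShape (h : InFamilyG1 G) : ∃ v u, PendantShape G v u := by
  obtain ⟨W, _, H, u, hd, hu, ⟨φ⟩⟩ := h
  refine ⟨φ.symm none, φ.symm (some u), PendantShape.of_iso φ ?_⟩
  simpa using pendantShape_addPendant u hd hu

end Pendant

/-! ### The family of central-edge joins -/

section Central

variable {V : Type*} {G : SimpleGraph V}

theorem CentralShape.of_iso {W : Type*} {H : SimpleGraph W} (φ : G ≃g H) {x y : V}
    (h : CentralShape H (φ x) (φ y)) : CentralShape G x y := by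
  have hi := φ.injective
  refine ⟨φ.map_adj_iff.1 h.adj, fun w h1 h2 => ?_, ?_, ?_, fun a b a1 a2 b1 b2 hab => ?_⟩
  · simpa [φ.map_adj_iff] using h.dom _ (hi.ne h1) (hi.ne h2)
  · obtain ⟨a, h1, h2, h3⟩ := h.left
    obtain ⟨a, rfl⟩ := φ.surjective a
    exact ⟨a, fun e => h1 (e ▸ rfl), φ.map_adj_iff.1 h2, fun e => h3 (φ.map_adj_iff.2 e)⟩
  · obtain ⟨a, h1, h2, h3⟩ := h.right
    obtain ⟨a, rfl⟩ := φ.surjective a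
    exact ⟨a, fun e => h1 (e ▸ rfl), φ.map_adj_iff.1 h2, fun e => h3 (φ.map_adj_iff.2 e)⟩
  · simpa [φ.map_adj_iff] using
      h.same _ _ (hi.ne a1) (hi.ne a2) (hi.ne b1) (hi.ne b2) (φ.map_adj_iff.2 hab)

theorem centralShape_centralEdgeJoin {V₀ V₁ V₂ : Type*} [Nonempty V₁] [Nonempty V₂]
    (G₀ : SimpleGraph V₀) (G₁ : SimpleGraph V₁) (G₂ : SimpleGraph V₂) :
    CentralShape (centralEdgeJoin G₀ G₁ G₂) (Sum.inr true) (Sum.inr false) := by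
  obtain ⟨a⟩ := ‹Nonempty V₁›
  obtain ⟨b⟩ := ‹Nonempty V₂›
  refine ⟨by simp [centralEdgeJoin], ?_, ⟨Sum.inl (Sum.inr (Sum.inl a)), ?_⟩,
    ⟨Sum.inl (Sum.inr (Sum.inr b)), ?_⟩, ?_⟩
  · rintro ((w | w | w) | (_ | _)) <;> simp [centralEdgeJoin]
  · simp [centralEdgeJoin]
  · simp [centralEdgeJoin]
  · rintro ((w | w | w) | (_ | _)) ((z | z | z) | (_ | _)) <;> simp [centralEdgeJoin]

theorem InFamilyG2.exists_centralShape (h : InFamilyG2 G) : ∃ x y, CentralShape G x y := by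
  obtain ⟨W₀, W₁, W₂, _, _, _, _, _, G₀, G₁, G₂, ⟨φ⟩⟩ := h
  refine ⟨φ.symm (Sum.inr true), φ.symm (Sum.inr false), CentralShape.of_iso φ ?_⟩
  simpa using centralShape_centralEdgeJoin G₀ G₁ G₂

theorem CentralShape.inFamilyG2 [Fintype V] {x y : V} (h : CentralShape G x y) :
    InFamilyG2 G := by
  classical
  have hxy := h.adj
  -- common neighbours of `x` and `y`, private neighbours of `x`, private neighbours of `y`
  let e₀ := Fintype.equivFin {w // G.Adj x w ∧ G.Adj y w}
  let e₁ := Fintype.equivFin {w // w ≠ y ∧ G.Adj x w ∧ ¬ G.Adj y w}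
  let e₂ := Fintype.equivFin {w // w ≠ x ∧ G.Adj y w ∧ ¬ G.Adj x w}
  have ne₁ : Nonempty (Fin (Fintype.card {w // w ≠ y ∧ G.Adj x w ∧ ¬ G.Adj y w})) := by
    obtain ⟨a, ha⟩ := h.left
    exact ⟨e₁ ⟨a, ha⟩⟩
  have ne₂ : Nonempty (Fin (Fintype.card {w // w ≠ x ∧ G.Adj y w ∧ ¬ G.Adj x w})) := by
    obtain ⟨a, ha⟩ := h.right
    exact ⟨e₂ ⟨a, ha⟩⟩
  let f : (Fin _ ⊕ Fin _ ⊕ Fin _) ⊕ Bool → V := Sum.elim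
    (Sum.elim (fun i => (e₀.symm i).1) (Sum.elim (fun i => (e₁.symm i).1) fun i => (e₂.symm i).1))
    (fun b => if b then x else y)
  have p₀ := fun i => (e₀.symm i).2
  have p₁ := fun i => (e₁.symm i).2
  have p₂ := fun i => (e₂.symm i).2
  have q₀ := fun i => And.intro (p₀ i).1.ne (p₀ i).2.ne
  have q₁ := fun i => (p₁ i).2.1.ne
  have q₂ := fun i => (p₂ i).2.1.ne
  have hne := hxy.ne
  have hinj : Function.Injective f := by
    rintro ((i | i | i) | (_ | _)) ((j | j | j) | (_ | _)) hij <;>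
      simp only [f, Sum.elim_inl, Sum.elim_inr, Subtype.val_inj, e₀.symm.injective.eq_iff,
        e₁.symm.injective.eq_iff, e₂.symm.injective.eq_iff, Bool.false_eq_true, if_true,
        if_false] at hij <;> grind
  have hsurj : Function.Surjective f := by
    intro w
    by_cases w1 : w = x
    · exact ⟨Sum.inr true, by simp [f, w1]⟩
    by_cases w2 : w = y
    · exact ⟨Sum.inr false, by simp [f, w2]⟩
    by_cases wx : G.Adj x w
    · by_cases wy : G.Adj y w
      · exact ⟨Sum.inl (Sum.inl (e₀ ⟨w, wx, wy⟩)), by simp [f]⟩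
      · exact ⟨Sum.inl (Sum.inr (Sum.inl (e₁ ⟨w, w2, wx, wy⟩))), by simp [f]⟩
    · have wy := (h.dom w w1 w2).resolve_left wx
      exact ⟨Sum.inl (Sum.inr (Sum.inr (e₂ ⟨w, w1, wy, wx⟩))), by simp [f]⟩
  refine ⟨_, _, _, inferInstance, inferInstance, inferInstance, ne₁, ne₂,
    G.comap fun i => (e₀.symm i).1, G.comap fun i => (e₁.symm i).1,
    G.comap fun i => (e₂.symm i).1, ⟨SimpleGraph.Iso.symm ⟨Equiv.ofBijective f ⟨hinj, hsurj⟩, ?_⟩⟩⟩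
  have hsame := h.same
  have hcomm := G.adj_comm
  intro s t
  -- unfold the join and read `s ≠ t` in `V`, where `f` sorts the vertices by their
  -- adjacency to `x` and `y`
  have hs : (centralEdgeJoin (G.comap fun i => (e₀.symm i).1) (G.comap fun i => (e₁.symm i).1)
      (G.comap fun i => (e₂.symm i).1)).Adj s t ↔ _ := SimpleGraph.fromRel_adj _ s t
  change G.Adj (f s) (f t) ↔ _
  rw [hs, ← hinj.ne_iff]
  clear hs
  revert s t
  rintro ((i | i | i) | (_ | _)) ((j | j | j) | (_ | _)) <;>
    simp only [f, Sum.elim_inl, Sum.elim_inr, SimpleGraph.comap_adj, Bool.false_eq_true, if_true,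
      if_false] <;> grind [SimpleGraph.Adj.ne, SimpleGraph.Adj.symm]

end Central

theorem edgeSet_ncard_pos {V : Type*} [Fintype V] {G : SimpleGraph V} (hG : G.Connected)
    (hn : 2 ≤ Fintype.card V) : 0 < G.edgeSet.ncard := by
  have : Nontrivial V := Fintype.one_lt_card_iff_nontrivial.1 hn
  obtain ⟨a⟩ := hG.nonempty
  obtain ⟨b, hab⟩ := hG.preconnected.exists_adj_of_nontrivial a
  exact (Set.ncard_pos (Set.toFinite _)).2 ⟨s(a, b), hab⟩

/-- For a finite connected graph `G` on at least 4 vertices,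
`gp_e(G) = m(G) - 1` if and only if `G ∈ 𝒢₁ ∪ 𝒢₂`. -/
theorem egp_eq_edgeCard_sub_one_iff {V : Type*} [Fintype V] (G : SimpleGraph V)
    (hG : G.Connected) (hn : 4 ≤ Fintype.card V) :
    G.egp = G.edgeSet.ncard - 1 ↔ InFamilyG1 G ∨ InFamilyG2 G := by
  rw [egp_iff_criticalEdge hG (edgeSet_ncard_pos hG (by omega))]
  constructor
  · rintro ⟨x, y, h⟩
    rcases exists_shape_of_criticalEdge h with ⟨v, u, h⟩ | ⟨x₁, x₂, h⟩
    · exact Or.inl h.inFamilyG1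
    · exact Or.inr h.inFamilyG2
  · rintro (h | h)
    · obtain ⟨v, u, h⟩ := h.exists_pendantShape
      exact ⟨v, u, h.criticalEdge⟩
    · obtain ⟨x, y, h⟩ := h.exists_centralShape
      exact ⟨x, y, h.criticalEdge⟩
end

section
/- If G is a finite connected simple graph that is not a tree (i.e., G contains a cycle), then gp_e(G) ≥ 3. -/
namespace SimpleGraph

variable {V : Type*} {G : SimpleGraph V}

lemma dist_getVert_of_length_eq_dist (hG : G.Connected) {u v : V} (p : G.Walk u v)
    (hp : p.length = G.dist u v) {i j : ℕ} (hij : i ≤ j) (hj : j ≤ p.length) :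
    G.dist (p.getVert i) (p.getVert j) = j - i := by
  have h1 : G.dist u (p.getVert i) ≤ i := by
    have := dist_le (p.take i)
    rw [Walk.take_length] at this
    omega
  have h2 : G.dist (p.getVert j) v ≤ p.length - j := by
    have := dist_le (p.drop j)
    rwa [Walk.drop_length] at this
  have h3 : G.dist (p.getVert i) (p.getVert j) ≤ j - i := by
    have := dist_le ((p.take j).drop i)
    rw [Walk.drop_length, Walk.take_length, Walk.take_getVert, min_eq_right hij] at this
    omega
  have h4 := hG.dist_triangle (u := u) (v := p.getVert i) (w := v)
  have h5 := hG.dist_triangle (u := p.getVert i) (v := p.getVert j) (w := v)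
  omega

/-- Distinct edges on a common shortest path are not in the Djoković–Winkler relation. -/
lemma dist_add_dist_eq_of_mem_edges (hG : G.Connected) {u v : V} (p : G.Walk u v)
    (hp : p.length = G.dist u v) {a b z w : V} (hab : s(a, b) ∈ p.edges) (hzw : s(z, w) ∈ p.edges)
    (hne : s(a, b) ≠ s(z, w)) :
    G.dist a z + G.dist b w = G.dist a w + G.dist b z := by
  rw [Walk.mk_mem_edges_iff_exists] at hab hzw
  obtain ⟨i, hi, hab⟩ := hab
  obtain ⟨j, hj, hzw⟩ := hzw
  have hij : i ≠ j := by
    rintro rfl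
    exact hne (hab.symm.trans hzw)
  -- The distance between two positions, written without a case distinction on their order.
  have key : ∀ k l, k ≤ p.length → l ≤ p.length →
      G.dist (p.getVert k) (p.getVert l) = (l - k) + (k - l) := by
    intro k l hk hl
    rcases le_total k l with h | h
    · rw [dist_getVert_of_length_eq_dist hG p hp h hl]
      omega
    · rw [dist_comm, dist_getVert_of_length_eq_dist hG p hp h hk]
      omega
  have k1 := key i j (by omega) (by omega)
  have k2 := key i (j + 1) (by omega) (by omega)
  have k3 := key (i + 1) j (by omega) (by omega)
  have k4 := key (i + 1) (j + 1) (by omega) (by omega)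
  rw [Sym2.eq_iff] at hab hzw
  rcases hab with ⟨rfl, rfl⟩ | ⟨rfl, rfl⟩ <;> rcases hzw with ⟨rfl, rfl⟩ | ⟨rfl, rfl⟩ <;> omega

lemma Walk.exists_mem_edges_apply_ne {α : Type*} (f : V → α) {u v : V} (p : G.Walk u v)
    (h : f u ≠ f v) : ∃ z w, s(z, w) ∈ p.edges ∧ f z ≠ f w := by
  induction p with
  | nil => exact absurd rfl h
  | @cons u x v hux q ih =>
    by_cases hx : f u = f x
    · obtain ⟨z, w, hzw, hne⟩ := ih (hx ▸ h)
      exact ⟨z, w, by simp [hzw], hne⟩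
    · exact ⟨u, x, by simp, hx⟩

/-- Two edges lying on no common shortest path, together with any third edge, form an edge
general position set. -/
lemma isEdgeGPSet_triple {e f t : Sym2 V} (he : e ∈ G.edgeSet) (hf : f ∈ G.edgeSet)
    (ht : t ∈ G.edgeSet)
    (h : ∀ (u v : V) (p : G.Walk u v), p.length = G.dist u v → e ∈ p.edges → f ∉ p.edges) :
    G.IsEdgeGPSet {e, f, t} := by
  refine ⟨by simp [Set.insert_subset_iff, he, hf, ht], fun u v p _ hp => ?_⟩
  have pair (x y : Sym2 V) : ({x, y} : Set (Sym2 V)).ncard ≤ 2 := by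
    simpa using Set.ncard_insert_le x {y}
  by_cases hep : e ∈ p.edges
  · refine (Set.ncard_le_ncard (t := {e, t}) ?_).trans (pair e t)
    rintro x ⟨rfl | rfl | rfl, hx⟩
    · simp
    · exact absurd hx (h u v p hp hep)
    · simp
  · refine (Set.ncard_le_ncard (t := {f, t}) ?_).trans (pair f t)
    rintro x ⟨rfl | rfl | rfl, hx⟩
    · exact absurd hx hep
    · simp
    · simp

end SimpleGraph

/-- If a finite connected graph `G` is not a tree (i.e. it contains a
cycle), then `gp_e(G) ≥ 3`. -/
theorem three_le_egp_of_not_acyclic {V : Type*} [Fintype V] (G : SimpleGraph V)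
    (hG : G.Connected) (h : ¬ G.IsAcyclic) :
    3 ≤ G.egp := by
  classical
  obtain ⟨a, c, hc⟩ : ∃ (a : V) (c : G.Walk a a), c.IsCycle := by
    simpa [SimpleGraph.IsAcyclic] using h
  obtain ⟨b, hb⟩ : ∃ b, s(a, b) ∈ c.edges := ⟨_, c.mk_start_snd_mem_edges hc.not_nil⟩
  obtain ⟨hab, hr⟩ := SimpleGraph.adj_and_reachable_delete_edges_iff_exists_cycle.mpr
    ⟨a, c, hc, hb⟩
  obtain ⟨p, hp⟩ := SimpleGraph.reachable_deleteEdges_iff_exists_walk.mp hr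
  have hd : G.dist a b = 1 := SimpleGraph.dist_eq_one_iff_adj.mpr hab
  obtain ⟨z, w, hzw, hne⟩ := p.exists_mem_edges_apply_ne
    (fun x => (G.dist a x : ℤ) - G.dist b x) (by
      simp [SimpleGraph.dist_comm (u := b) (v := a), hd])
  have hef : s(a, b) ≠ s(z, w) := fun h => hp (h ▸ hzw)
  obtain ⟨t, htc, ht⟩ := Finset.exists_mem_notMem_of_card_lt_card
    (s := {s(a, b), s(z, w)}) (t := c.edges.toFinset) (by
      rw [List.toFinset_card_of_nodup hc.edges_nodup, c.length_edges]
      exact Finset.card_le_two.trans_lt hc.three_le_length)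
  simp only [Finset.mem_insert, Finset.mem_singleton, not_or] at ht
  refine le_csSup ⟨Nat.card (Sym2 V), ?_⟩ ⟨{s(a, b), s(z, w), t}, ?_, ?_⟩
  · rintro n ⟨X, -, rfl⟩
    exact Set.ncard_le_card X
  · refine SimpleGraph.isEdgeGPSet_triple hab (p.edges_subset_edgeSet hzw)
      (c.edges_subset_edgeSet (List.mem_toFinset.mp htc)) fun u v q hq he hf => hne ?_
    have := SimpleGraph.dist_add_dist_eq_of_mem_edges hG q hq he hf hef
    omega
  · exact Set.ncard_eq_three.mpr ⟨_, _, _, hef, Ne.symm ht.1, Ne.symm ht.2, rfl⟩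
end

section
/- If G is a finite connected block graph, then gp_e(G) ≤ C(s(G), 2) + 1, where s(G) is the number of simplicial vertices of G and C(n,2) = n(n−1)/2 denotes a binomial coefficient. -/
/-- `G` is a block graph: every block (maximal connected subgraph without a cut-vertex)
of `G` is complete.  Equivalently — and this is the form used here — any two distinct
vertices lying on a common cycle of `G` are adjacent, i.e. the vertex set of every
cycle is a clique. -/
def SimpleGraph.IsBlockGraph {V : Type*} (G : SimpleGraph V) : Prop :=
  ∀ ⦃v : V⦄ (c : G.Walk v v), c.IsCycle → G.IsClique {x | x ∈ c.support}

/-- A vertex is simplicial if its neighbourhood induces a complete subgraph. -/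
def SimpleGraph.IsSimplicialVertex {V : Type*} (G : SimpleGraph V) (v : V) : Prop :=
  G.IsClique (G.neighborSet v)

/-- The set of simplicial edges of `G`: edges incident with at least one simplicial
vertex. -/
def SimpleGraph.simplicialEdges {V : Type*} (G : SimpleGraph V) : Set (Sym2 V) :=
  {e | e ∈ G.edgeSet ∧ ∃ v ∈ e, G.IsSimplicialVertex v}

/-- The vertices strictly closer to `u` than to `v`.  For an edge `uv` of a block graph this is
the branch hanging at `u` once the edges of the block containing `uv` are removed. -/
def SimpleGraph.side {V : Type*} (G : SimpleGraph V) (u v : V) : Set V :=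
  {x | G.dist x u < G.dist x v}

/-- The edge `e` separates `a` from `b`: one end of `e` is strictly closer to `a` and the other
one strictly closer to `b`. In a block graph this says that the `a`-`b` geodesic uses `e`. -/
def SimpleGraph.Separates {V : Type*} (G : SimpleGraph V) (e : Sym2 V) (a b : V) : Prop :=
  ∃ u v, e = s(u, v) ∧ a ∈ G.side u v ∧ b ∈ G.side v u

namespace SimpleGraph

variable {V : Type*} {G : SimpleGraph V}

theorem mem_side {u v x : V} : x ∈ G.side u v ↔ G.dist x u < G.dist x v := Iff.rfl

theorem Separates.symm {e : Sym2 V} {a b : V} (h : G.Separates e a b) : G.Separates e b a := by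
  obtain ⟨u, v, rfl, ha, hb⟩ := h
  exact ⟨v, u, Sym2.eq_swap, hb, ha⟩

theorem Separates.ne {e : Sym2 V} {a b : V} (h : G.Separates e a b) : a ≠ b := by
  rintro rfl
  obtain ⟨u, v, rfl, ha, hb⟩ := h
  rw [mem_side] at ha hb
  exact lt_asymm ha hb

theorem left_mem_side {u v : V} (h : G.Adj u v) : u ∈ G.side u v := by
  simp [mem_side, dist_eq_one_iff_adj.2 h]

theorem dist_eq_succ_of_mem_side (hG : G.Connected) {u v x : V} (h : G.Adj u v)
    (hx : x ∈ G.side u v) : G.dist x v = G.dist x u + 1 := by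
  have h1 := hG.dist_triangle (u := x) (v := u) (w := v)
  rw [dist_eq_one_iff_adj.2 h] at h1
  rw [mem_side] at hx
  omega

/-! ### Geodesics -/

theorem dist_add_dist_of_mem_geodesic (hG : G.Connected) {a b x : V} (p : G.Walk a b)
    (hp : p.length = G.dist a b) (hx : x ∈ p.support) :
    G.dist a x + G.dist x b = G.dist a b := by
  classical
  have h1 := dist_le (p.takeUntil x hx)
  have h2 := dist_le (p.dropUntil x hx)
  have h3 := congrArg Walk.length (p.take_spec hx)
  rw [Walk.length_append] at h3
  have h4 := hG.dist_triangle (u := a) (v := x) (w := b)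
  omega

theorem dist_getVert_of_geodesic (hG : G.Connected) {a b : V} (p : G.Walk a b)
    (hp : p.length = G.dist a b) {i : ℕ} (hi : i ≤ p.length) :
    G.dist a (p.getVert i) = i := by
  have h1 := dist_le (p.take i)
  have h2 := dist_le (p.drop i)
  have h4 := hG.dist_triangle (u := a) (v := p.getVert i) (w := b)
  simp only [Walk.take_length, Walk.drop_length] at h1 h2
  omega

theorem edge_mem_of_geodesic (hG : G.Connected) {a b u v : V} (p : G.Walk a b)
    (hp : p.length = G.dist a b) (hu : u ∈ p.support) (hv : v ∈ p.support)
    (h : G.dist a v = G.dist a u + 1) : s(u, v) ∈ p.edges := by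
  obtain ⟨i, rfl, hi⟩ := Walk.mem_support_iff_exists_getVert.1 hu
  obtain ⟨j, rfl, hj⟩ := Walk.mem_support_iff_exists_getVert.1 hv
  rw [dist_getVert_of_geodesic hG p hp hi, dist_getVert_of_geodesic hG p hp hj] at h
  subst h
  rw [Walk.mk_mem_edges_iff_exists]
  exact ⟨i, by omega, rfl⟩

/-! ### Sides of an edge in a block graph -/

/-- Along a geodesic towards `u` one stays closer to `u` than to `v`. -/
theorem mem_side_of_mem_geodesic (hG : G.Connected) {u v x z : V} (hx : x ∈ G.side u v)
    (p : G.Walk x u) (hp : p.length = G.dist x u) (hz : z ∈ p.support) : z ∈ G.side u v := by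
  have h1 := dist_add_dist_of_mem_geodesic hG p hp hz
  have h2 := hG.dist_triangle (u := x) (v := z) (w := v)
  rw [mem_side] at *
  omega

/-- Along a geodesic towards `v` one stays outside the side of `u`. -/
theorem notMem_side_of_mem_geodesic (hG : G.Connected) {u v y z : V} (hy : y ∉ G.side u v)
    (p : G.Walk v y) (hp : p.length = G.dist v y) (hz : z ∈ p.support) : z ∉ G.side u v := by
  have h1 := dist_add_dist_of_mem_geodesic hG p hp hz
  have h2 := hG.dist_triangle (u := y) (v := z) (w := u)
  rw [mem_side] at *
  rw [G.dist_comm (u := v) (v := z), G.dist_comm (u := v) (v := y),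
    G.dist_comm (u := z) (v := y)] at h1
  omega

/-- In a block graph the side of `u` with respect to an edge `uv` can only be left through `u`:
leaving it through another vertex `x` would create a cycle through `x`, `u` and `v`, which makes
`x` equidistant from `u` and `v`. -/
theorem eq_of_adj_of_mem_side (hG : G.Connected) (hb : G.IsBlockGraph) {u v x y : V}
    (huv : G.Adj u v) (hxy : G.Adj x y) (hx : x ∈ G.side u v) (hy : y ∉ G.side u v) :
    x = u := by
  by_contra hne
  obtain ⟨p, hpp, hp⟩ := hG.exists_path_of_dist x u
  obtain ⟨q, hqp, hq⟩ := hG.exists_path_of_dist v y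
  have hpm : ∀ z ∈ p.support, z ∈ G.side u v := fun z hz => mem_side_of_mem_geodesic hG hx p hp hz
  have hqm : ∀ z ∈ q.support, z ∉ G.side u v :=
    fun z hz => notMem_side_of_mem_geodesic hG hy q hq hz
  have hpath : (q.append (Walk.cons hxy.symm p)).IsPath := by
    rw [Walk.isPath_def, Walk.support_append, Walk.support_cons, List.tail_cons,
      List.nodup_append']
    exact ⟨hqp.support_nodup, hpp.support_nodup, fun z hz hz' => hqm z hz (hpm z hz')⟩
  have hcyc : (Walk.cons huv (q.append (Walk.cons hxy.symm p))).IsCycle := by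
    rw [Walk.cons_isCycle_iff]
    refine ⟨hpath, ?_⟩
    rw [Walk.edges_append, Walk.edges_cons, List.mem_append, List.mem_cons]
    rintro (h | h | h)
    · exact hqm u (q.fst_mem_support_of_mem_edges h) (left_mem_side huv)
    · rcases Sym2.eq_iff.1 h with ⟨h1, -⟩ | ⟨h1, -⟩
      · exact hy (h1 ▸ left_mem_side huv)
      · exact hne h1.symm
    · exact hqm v q.start_mem_support (hpm v (p.snd_mem_support_of_mem_edges h))
  have hcl := hb _ hcyc
  have hxs : x ∈ (Walk.cons huv (q.append (Walk.cons hxy.symm p))).support := by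
    simp [Walk.mem_support_append_iff]
  have hvs : v ∈ (Walk.cons huv (q.append (Walk.cons hxy.symm p))).support := by
    simp
  have hus : u ∈ (Walk.cons huv (q.append (Walk.cons hxy.symm p))).support := by
    simp
  have hxv : x ≠ v := by
    rintro rfl
    exact hqm x q.start_mem_support hx
  have h1 : G.Adj x v := hcl hxs hvs hxv
  have h2 : G.Adj x u := hcl hxs hus hne
  rw [mem_side, dist_eq_one_iff_adj.2 h1, dist_eq_one_iff_adj.2 h2] at hx
  exact lt_irrefl _ hx

theorem mem_support_of_mem_side (hG : G.Connected) (hb : G.IsBlockGraph) {u v x y : V}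
    (huv : G.Adj u v) (hx : x ∈ G.side u v) (hy : y ∉ G.side u v) (p : G.Walk x y) :
    u ∈ p.support := by
  obtain ⟨d, hd, h1, h2⟩ := p.exists_boundary_dart (G.side u v) hx hy
  rw [← eq_of_adj_of_mem_side hG hb huv d.adj h1 h2]
  exact p.dart_fst_mem_support_of_mem_darts hd

theorem dist_eq_add_of_mem_side (hG : G.Connected) (hb : G.IsBlockGraph) {u v x y : V}
    (huv : G.Adj u v) (hx : x ∈ G.side u v) (hy : y ∉ G.side u v) :
    G.dist x y = G.dist x u + G.dist u y := by
  obtain ⟨p, hp⟩ := hG.exists_walk_length_eq_dist x y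
  exact (dist_add_dist_of_mem_geodesic hG p hp (mem_support_of_mem_side hG hb huv hx hy p)).symm

theorem notMem_side_swap {u v x : V} (hx : x ∈ G.side u v) : x ∉ G.side v u :=
  fun h => lt_asymm (mem_side.1 hx) (mem_side.1 h)

/-- An edge separating `a` from `b` lies on every `a`-`b` geodesic. -/
theorem Separates.mem_edges (hG : G.Connected) (hb : G.IsBlockGraph) {e : Sym2 V} {a b : V}
    (h : G.Separates e a b) (he : e ∈ G.edgeSet) (p : G.Walk a b)
    (hp : p.length = G.dist a b) : e ∈ p.edges := by
  obtain ⟨u, v, rfl, h1, h2⟩ := h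
  have huv : G.Adj u v := he
  refine edge_mem_of_geodesic hG p hp
    (mem_support_of_mem_side hG hb huv h1 (notMem_side_swap h2) p) ?_
    (dist_eq_succ_of_mem_side hG huv h1)
  have := mem_support_of_mem_side hG hb huv.symm h2 (notMem_side_swap h1) p.reverse
  simpa using this

/-- Every side of an edge of a finite block graph contains a simplicial vertex, namely the end `x`
of any oriented edge `xw` whose side is minimal inside the given one. -/
theorem exists_simplicial_mem_side [Finite V] (hG : G.Connected) (hb : G.IsBlockGraph)
    {u v : V} (huv : G.Adj u v) : ∃ a ∈ G.side u v, G.IsSimplicialVertex a := by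
  classical
  induction hn : (G.side u v).ncard using Nat.strong_induction_on generalizing u v with
  | _ n ih =>
    subst hn
    by_cases hy : ∃ y, G.Adj u y ∧ y ∈ G.side u v
    · obtain ⟨y, huy, hys⟩ := hy
      have hdy : G.dist y v = 2 := by
        rw [dist_eq_succ_of_mem_side hG huv hys, dist_eq_one_iff_adj.2 huy.symm]
      have hv : v ∉ G.side y u := by
        rw [mem_side, G.dist_comm (u := v), hdy, dist_eq_one_iff_adj.2 huv.symm]
        omega
      have hsub : G.side y u ⊆ G.side u v := by
        intro z hz
        have h1 := dist_eq_add_of_mem_side hG hb huy.symm hz hv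
        have h2 := dist_eq_succ_of_mem_side hG huy.symm hz
        rw [mem_side]
        omega
      have hss : G.side y u ⊂ G.side u v :=
        (Set.ssubset_iff_of_subset hsub).2
          ⟨u, left_mem_side huv, notMem_side_swap (left_mem_side huy)⟩
      obtain ⟨a, ha, hs⟩ := ih _ (Set.ncard_lt_ncard hss (Set.toFinite _)) huy.symm rfl
      exact ⟨a, hsub ha, hs⟩
    · -- No neighbour of `u` lies on its side, so all of them lie in the block of `uv`.
      refine ⟨u, left_mem_side huv, ?_⟩
      have key : ∀ y, G.Adj u y → y = v ∨ G.Adj y v := by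
        intro y huy
        by_contra! hcon
        refine hy ⟨y, huy, ?_⟩
        have := hG.one_lt_dist_of_ne_of_not_adj hcon.1 hcon.2
        rw [mem_side, dist_eq_one_iff_adj.2 huy.symm]
        exact this
      intro y hy' z hz' hyz
      rw [mem_neighborSet] at hy' hz'
      rcases key y hy' with rfl | h1
      · rcases key z hz' with rfl | h2
        · exact absurd rfl hyz
        · exact h2.symm
      · rcases key z hz' with rfl | h2
        · exact h1
        · have hc : (Walk.cons hy' (Walk.cons h1 (Walk.cons h2.symm
              (Walk.cons hz'.symm Walk.nil)))).IsCycle := by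
            rw [Walk.cons_isCycle_iff]
            have := hy'.ne; have := h1.ne; have := h2.ne; have := hz'.ne; have := huv.ne
            simp [Walk.cons_isPath_iff]
            grind
          exact hb _ hc (by simp) (by simp) hyz

/-- If `uv` and then `xy` are met along the `a`-`b` geodesic, everything outside the `v`-side of
`uv` lies on the `x`-side of `xy`: the way to `xy` leads through `v`. -/
theorem mem_side_of_later (hG : G.Connected) (hb : G.IsBlockGraph) {u v x y a b t : V}
    (huv : G.Adj u v) (hxy : G.Adj x y) (hau : a ∈ G.side u v) (hbv : b ∈ G.side v u)
    (hax : a ∈ G.side x y) (hby : b ∈ G.side y x) (hlt : G.dist a u < G.dist a x)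
    (ht : t ∉ G.side v u) : t ∈ G.side x y := by
  have e1 := dist_eq_add_of_mem_side hG hb huv hau (notMem_side_swap hbv)
  have e2 := dist_eq_add_of_mem_side hG hb hxy hax (notMem_side_swap hby)
  have e3 := dist_eq_succ_of_mem_side hG huv.symm hbv
  have e4 := dist_eq_succ_of_mem_side hG hxy.symm hby
  rw [G.dist_comm (u := u) (v := b)] at e1
  rw [G.dist_comm (u := x) (v := b)] at e2
  have hxv : x ∈ G.side v u := by
    by_contra hx
    have h := dist_eq_add_of_mem_side hG hb huv.symm hbv hx
    have h0 : G.dist v x = 0 := by omega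
    rw [hG.dist_eq_zero_iff] at h0
    subst h0
    exact hx (left_mem_side huv.symm)
  have hyv : y ∈ G.side v u := by
    by_contra hy
    have hx := eq_of_adj_of_mem_side hG hb huv.symm hxy hxv hy
    subst hx
    have h := dist_eq_add_of_mem_side hG hb huv.symm hbv hy
    omega
  have h1 := dist_eq_add_of_mem_side hG hb huv.symm hxv ht
  have h2 := dist_eq_add_of_mem_side hG hb huv.symm hyv ht
  have h3 := dist_eq_add_of_mem_side hG hb huv.symm hxv (notMem_side_swap hau)
  have h4 := dist_eq_add_of_mem_side hG hb huv.symm hyv (notMem_side_swap hau)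
  rw [mem_side] at hax ⊢
  rw [G.dist_comm (u := a) (v := x), G.dist_comm (u := a) (v := y)] at hax
  rw [G.dist_comm (u := t) (v := x), G.dist_comm (u := t) (v := y)]
  omega

/-- Two edges separating `a` from `b` whose ends nearer to `a` are at the same distance from `a`
have the same end nearer to `a`. -/
theorem eq_of_dist_eq (hG : G.Connected) (hb : G.IsBlockGraph) {u v x y a b : V}
    (huv : G.Adj u v) (hxy : G.Adj x y) (hau : a ∈ G.side u v) (hbv : b ∈ G.side v u)
    (hax : a ∈ G.side x y) (hby : b ∈ G.side y x) (heq : G.dist a u = G.dist a x) :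
    x = u := by
  have e1 := dist_eq_add_of_mem_side hG hb huv hau (notMem_side_swap hbv)
  have e2 := dist_eq_add_of_mem_side hG hb hxy hax (notMem_side_swap hby)
  by_cases hx : x ∈ G.side u v
  · have h := dist_eq_add_of_mem_side hG hb huv hx (notMem_side_swap hbv)
    rw [← hG.dist_eq_zero_iff]
    omega
  · have h := dist_eq_add_of_mem_side hG hb huv hau hx
    rw [eq_comm, ← hG.dist_eq_zero_iff]
    omega

/-- Let `e` separate `a` from `b` and no other pair of vertices of `S`.  Any other edge `f`
separating `a` from `b` separates one of `a`, `b` from all other vertices of `S`. -/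
theorem separates_all_of_exclusive (hG : G.Connected) (hb : G.IsBlockGraph) {S : Set V}
    {e f : Sym2 V} (he : e ∈ G.edgeSet) (hf : f ∈ G.edgeSet) (hef : e ≠ f) {a b : V}
    (ha : a ∈ S) (hbS : b ∈ S)
    (hea : G.Separates e a b) (hfa : G.Separates f a b)
    (hex : ∀ c ∈ S, ∀ d ∈ S, G.Separates e c d → s(c, d) = s(a, b)) :
    (∀ t ∈ S, t ≠ b → G.Separates f b t) ∨ (∀ t ∈ S, t ≠ a → G.Separates f a t) := by
  obtain ⟨u, v, rfl, hau, hbv⟩ := hea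
  obtain ⟨x, y, rfl, hax, hby⟩ := hfa
  have huv : G.Adj u v := he
  have hxy : G.Adj x y := hf
  have e1 := dist_eq_add_of_mem_side hG hb huv hau (notMem_side_swap hbv)
  have e2 := dist_eq_add_of_mem_side hG hb hxy hax (notMem_side_swap hby)
  have e3 := dist_eq_succ_of_mem_side hG huv.symm hbv
  have e4 := dist_eq_succ_of_mem_side hG hxy.symm hby
  rw [G.dist_comm (u := u) (v := b)] at e1
  rw [G.dist_comm (u := x) (v := b)] at e2
  rcases lt_trichotomy (G.dist a u) (G.dist a x) with hlt | heq | hlt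
  · left
    intro t ht htb
    refine ⟨y, x, Sym2.eq_swap, hby, ?_⟩
    refine mem_side_of_later hG hb huv hxy hau hbv hax hby hlt fun htv => htb ?_
    have := hex a ha t ht ⟨u, v, rfl, hau, htv⟩
    exact Sym2.congr_right.1 this
  · refine absurd ?_ hef
    have h1 := eq_of_dist_eq hG hb huv hxy hau hbv hax hby heq
    have h2 := eq_of_dist_eq hG hb huv.symm hxy.symm hbv hau hby hax (by omega)
    rw [h1, h2]
  · right
    intro t ht hta
    refine ⟨x, y, rfl, hax, ?_⟩
    refine mem_side_of_later hG hb huv.symm hxy.symm hbv hau hby hax (by omega)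
      fun htu => hta ?_
    have := hex t ht b hbS ⟨u, v, rfl, htu, hbv⟩
    exact Sym2.congr_left.1 this

/-! ### Counting -/

/-- Weighted double counting: if every `r ∈ R` is related to some `p ∈ P`, every `p` is related to
at most two elements of `R`, and an `r` related to a single `p` is the only element related to
that `p`, then `#R ≤ #P`.  Each `p` spreads a unit weight evenly among its relatives. -/
theorem card_le_card_of_exclusive {α β : Type*} (R : Finset α) (P : Finset β)
    (r : α → β → Prop) (h1 : ∀ e ∈ R, ∃ p ∈ P, r e p)
    (h2 : ∀ p ∈ P, ∀ T ⊆ R, (∀ e ∈ T, r e p) → T.card ≤ 2)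
    (h3 : ∀ e ∈ R, ∀ p ∈ P, r e p → (∀ q ∈ P, r e q → q = p) → ∀ f ∈ R, r f p → f = e) :
    R.card ≤ P.card := by
  classical
  let N : β → Finset α := fun p => R.filter fun e => r e p
  have hN2 : ∀ p ∈ P, (N p).card ≤ 2 := fun p hp =>
    h2 p hp _ (Finset.filter_subset _ _) fun e he => (Finset.mem_filter.1 he).2
  have hNpos : ∀ p, ∀ e ∈ R, r e p → 0 < (N p).card := fun p e he hr =>
    Finset.card_pos.2 ⟨e, Finset.mem_filter.2 ⟨he, hr⟩⟩
  have lower : ∀ e ∈ R, (1 : ℚ) ≤ ∑ p ∈ P, if r e p then ((N p).card : ℚ)⁻¹ else 0 := by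
    intro e he
    have hnn : ∀ p ∈ P, (0 : ℚ) ≤ if r e p then ((N p).card : ℚ)⁻¹ else 0 := by
      intro p _
      split_ifs <;> positivity
    obtain ⟨p, hp, hr⟩ := h1 e he
    by_cases hex : ∀ q ∈ P, r e q → q = p
    · have hc : (N p).card = 1 := by
        rw [Finset.card_eq_one]
        refine ⟨e, ?_⟩
        ext f
        simp only [N, Finset.mem_filter, Finset.mem_singleton]
        exact ⟨fun hf => h3 e he p hp hr hex f hf.1 hf.2, fun hf => hf ▸ ⟨he, hr⟩⟩
      calc (1 : ℚ) = if r e p then ((N p).card : ℚ)⁻¹ else 0 := by simp [hr, hc]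
        _ ≤ _ := Finset.single_le_sum hnn hp
    · push Not at hex
      obtain ⟨q, hq, hrq, hqp⟩ := hex
      have half : ∀ q ∈ P, r e q → (1 / 2 : ℚ) ≤ if r e q then ((N q).card : ℚ)⁻¹ else 0 := by
        intro q hq hrq
        rw [if_pos hrq, one_div]
        have h5 : (0 : ℚ) < (N q).card := by exact_mod_cast hNpos q e he hrq
        have h6 : ((N q).card : ℚ) ≤ 2 := by exact_mod_cast hN2 q hq
        exact inv_anti₀ h5 h6
      have hsub : ({p, q} : Finset β) ⊆ P := by
        intro z hz
        rcases Finset.mem_insert.1 hz with rfl | hz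
        · exact hp
        · rw [Finset.mem_singleton.1 hz]; exact hq
      have := Finset.sum_le_sum_of_subset_of_nonneg hsub (fun i hi _ => hnn i hi)
      rw [Finset.sum_pair hqp.symm] at this
      linarith [half p hp hr, half q hq hrq]
  have upper : ∀ p ∈ P, (∑ e ∈ R, if r e p then ((N p).card : ℚ)⁻¹ else 0) ≤ 1 := by
    intro p _
    rw [← Finset.sum_filter, Finset.sum_const, nsmul_eq_mul]
    exact mul_inv_le_one
  have : (R.card : ℚ) ≤ P.card := by
    calc (R.card : ℚ) = ∑ e ∈ R, 1 := by simp
      _ ≤ ∑ e ∈ R, ∑ p ∈ P, if r e p then ((N p).card : ℚ)⁻¹ else 0 := Finset.sum_le_sum lower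
      _ = ∑ p ∈ P, ∑ e ∈ R, if r e p then ((N p).card : ℚ)⁻¹ else 0 := Finset.sum_comm
      _ ≤ ∑ p ∈ P, 1 := Finset.sum_le_sum upper
      _ = P.card := by simp
  exact_mod_cast this

/-- The edges separating `a` from `b` all lie on one geodesic, so `X` has at most two of them. -/
theorem IsEdgeGPSet.card_le_two (hG : G.Connected) (hb : G.IsBlockGraph) {X : Set (Sym2 V)}
    (hX : G.IsEdgeGPSet X) {a b : V} (T : Finset (Sym2 V)) (hTX : ↑T ⊆ X)
    (hT : ∀ e ∈ T, G.Separates e a b) : T.card ≤ 2 := by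
  obtain ⟨p, hpp, hp⟩ := hG.exists_path_of_dist a b
  refine le_trans ?_ (hX.2 a b p hpp hp)
  rw [← Set.ncard_coe_finset]
  refine Set.ncard_le_ncard (fun e he => ⟨hTX he, ?_⟩)
    ((List.finite_toSet p.edges).subset Set.inter_subset_right)
  exact (hT e he).mem_edges hG hb (hX.1 (hTX he)) p hp

/-- The number of edges of `R` is at most the number of pairs from `S`, provided that the edges of
`R` only separate simplicial vertices belonging to `S`, and that no edge of `R` separates a vertex
of `S` from all other simplicial vertices. -/
theorem IsEdgeGPSet.card_le_choose [Finite V] (hG : G.Connected) (hb : G.IsBlockGraph)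
    {X : Set (Sym2 V)} (hX : G.IsEdgeGPSet X) (R : Finset (Sym2 V)) (hR : ↑R ⊆ X)
    (S : Finset V)
    (hS : ∀ e ∈ R, ∀ a b, G.IsSimplicialVertex a → G.IsSimplicialVertex b →
      G.Separates e a b → a ∈ S)
    (hSs : ∀ a ∈ S, G.IsSimplicialVertex a)
    (hfull : ∀ f ∈ R, ∀ b ∈ S, ¬ ∀ t, G.IsSimplicialVertex t → t ≠ b → G.Separates f b t) :
    R.card ≤ S.card.choose 2 := by
  classical
  have hS' : ∀ e ∈ R, ∀ a b, G.IsSimplicialVertex a → G.IsSimplicialVertex b →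
      G.Separates e a b → b ∈ S := fun e he a b ha hb' h => hS e he b a hb' ha h.symm
  rw [← Sym2.card_image_offDiag]
  have hP : ∀ p : Sym2 V, p ∈ S.offDiag.image Sym2.mk.uncurry ↔
      ∃ a ∈ S, ∃ b ∈ S, a ≠ b ∧ s(a, b) = p := by
    intro p
    simp only [Finset.mem_image, Finset.mem_offDiag, Prod.exists, Function.uncurry]
    constructor
    · rintro ⟨a, b, ⟨ha, hb', hab⟩, h⟩
      exact ⟨a, ha, b, hb', hab, h⟩
    · rintro ⟨a, ha, b, hb', hab, h⟩
      exact ⟨a, b, ⟨ha, hb', hab⟩, h⟩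
  -- `e` is related to `s(a, b)` when it separates `a` from `b`.
  have hrel : ∀ (e : Sym2 V) (a b : V),
      (∃ c d, s(c, d) = s(a, b) ∧ G.Separates e c d) → G.Separates e a b := by
    rintro e a b ⟨c, d, h, hs⟩
    rcases Sym2.eq_iff.1 h with ⟨rfl, rfl⟩ | ⟨rfl, rfl⟩
    · exact hs
    · exact hs.symm
  refine card_le_card_of_exclusive R _
    (fun e p => ∃ c d, s(c, d) = p ∧ G.Separates e c d) ?_ ?_ ?_
  · intro e he
    have hE : e ∈ G.edgeSet := hX.1 (hR he)
    induction e using Sym2.ind with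
    | _ u v =>
      have huv : G.Adj u v := hE
      obtain ⟨a, ha, has⟩ := exists_simplicial_mem_side hG hb huv
      obtain ⟨b, hbv, hbs⟩ := exists_simplicial_mem_side hG hb huv.symm
      have hsep : G.Separates s(u, v) a b := ⟨u, v, rfl, ha, hbv⟩
      exact ⟨s(a, b), (hP _).2 ⟨a, hS _ he a b has hbs hsep, b, hS' _ he a b has hbs hsep,
        hsep.ne, rfl⟩, a, b, rfl, hsep⟩
  · intro p hp T hT hTr
    obtain ⟨a, -, b, -, -, rfl⟩ := (hP p).1 hp
    exact hX.card_le_two hG hb T (fun e he => hR (hT he)) fun e he => hrel e a b (hTr e he)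
  · intro e he p hp hep hex f hf hfp
    obtain ⟨a, ha, b, hbS, hab, rfl⟩ := (hP p).1 hp
    by_contra hfe
    have hdich := separates_all_of_exclusive (S := {x | G.IsSimplicialVertex x}) hG hb
      (hX.1 (hR he)) (hX.1 (hR hf)) (Ne.symm hfe) (hSs a ha) (hSs b hbS)
      (hrel e a b hep) (hrel f a b hfp) (fun c hc d hd hsep =>
        hex _ ((hP _).2 ⟨c, hS e he c d hc hd hsep, d, hS' e he c d hc hd hsep, hsep.ne, rfl⟩)
          ⟨c, d, rfl, hsep⟩)
    rcases hdich with h | h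
    · exact hfull f hf b hbS h
    · exact hfull f hf a ha h

/-- The bound for a single edge general position set.  If some `f ∈ X` separates a simplicial
vertex `b` from all the others, the edges of `X` are split according to whether they separate `b`
from something; otherwise `IsEdgeGPSet.card_le_choose` applies to all of `X`. -/
theorem IsEdgeGPSet.ncard_le [Fintype V] (hG : G.Connected) (hb : G.IsBlockGraph)
    {X : Set (Sym2 V)} (hX : G.IsEdgeGPSet X) :
    X.ncard ≤ ({v : V | G.IsSimplicialVertex v}.ncard).choose 2 + 1 := by
  classical
  set S : Finset V := {v : V | G.IsSimplicialVertex v}.toFinset with hSdef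
  have hmS : ∀ v, v ∈ S ↔ G.IsSimplicialVertex v := by simp [hSdef]
  rw [Set.ncard_eq_toFinset_card' X, Set.ncard_eq_toFinset_card' {v : V | G.IsSimplicialVertex v}]
  change X.toFinset.card ≤ S.card.choose 2 + 1
  set Y := X.toFinset with hY
  have hYX : ∀ e, e ∈ Y ↔ e ∈ X := by simp [hY]
  by_cases hfull : ∃ f ∈ Y, ∃ b ∈ S, ∀ t, G.IsSimplicialVertex t → t ≠ b → G.Separates f b t
  · obtain ⟨f, hf, b, hbS, hfb⟩ := hfull
    -- An edge other than `f` separating `b` from `t` is the only one to do so, because `f` and this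
    -- edge exhaust the geodesic from `b` to `t`; so these edges inject into the vertices `t`.
    set Z := Y.filter fun e => ∃ t ∈ S, G.Separates e b t with hZ
    have hZc : (Z.erase f).card ≤ (S.erase b).card := by
      have hch : ∀ e ∈ Z.erase f, ∃ t ∈ S, G.Separates e b t := fun e he =>
        (Finset.mem_filter.1 (Finset.mem_of_mem_erase he)).2
      have : Nonempty V := ⟨b⟩
      choose! g hg hgs using hch
      refine Finset.card_le_card_of_injOn g
        (fun e he => Finset.mem_erase.2 ⟨(hgs e he).ne.symm, hg e he⟩) ?_
      intro e he e' he' hee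
      by_contra hne
      have hef : e ≠ f := (Finset.mem_erase.1 he).1
      have hef' : e' ≠ f := (Finset.mem_erase.1 he').1
      have heX : e ∈ X := (hYX e).1 (Finset.mem_filter.1 (Finset.mem_of_mem_erase he)).1
      have heX' : e' ∈ X := (hYX e').1 (Finset.mem_filter.1 (Finset.mem_of_mem_erase he')).1
      have hfX : f ∈ X := (hYX f).1 hf
      have h3 : ({e, e', f} : Finset (Sym2 V)).card = 3 :=
        Finset.card_eq_three.2 ⟨e, e', f, hne, hef, hef', rfl⟩
      have h2 := hX.card_le_two hG hb (a := b) (b := g e) {e, e', f}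
        (by
          intro z hz
          simp only [Finset.coe_insert, Finset.coe_singleton, Set.mem_insert_iff,
            Set.mem_singleton_iff] at hz
          rcases hz with rfl | rfl | rfl <;> assumption)
        (by
          intro z hz
          simp only [Finset.mem_insert, Finset.mem_singleton] at hz
          rcases hz with rfl | rfl | rfl
          · exact hgs _ he
          · exact hee ▸ hgs _ he'
          · exact hfb _ ((hmS _).1 (hg e he)) (hgs e he).ne.symm)
      omega
    -- The other edges only separate pairs avoiding `b`.
    have hRc : (Y \ Z).card ≤ (S.erase b).card.choose 2 := by
      have hnot : ∀ e ∈ Y \ Z, ∀ t ∈ S, ¬ G.Separates e b t := fun e he t ht hs => by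
        rw [Finset.mem_sdiff] at he
        exact he.2 (Finset.mem_filter.2 ⟨he.1, t, ht, hs⟩)
      refine hX.card_le_choose hG hb (Y \ Z)
        (fun e he => (hYX e).1 (Finset.mem_sdiff.1 he).1) (S.erase b) ?_ ?_ ?_
      · intro e he a c ha hc hs
        refine Finset.mem_erase.2 ⟨?_, (hmS a).2 ha⟩
        rintro rfl
        exact hnot e he c ((hmS c).2 hc) hs
      · intro a ha
        exact (hmS a).1 (Finset.mem_of_mem_erase ha)
      · intro f' hf' c hc hall
        obtain ⟨hcb, hcS⟩ := Finset.mem_erase.1 hc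
        exact hnot f' hf' c hcS (hall b ((hmS b).1 hbS) hcb.symm).symm
    have hsplit : (Y \ Z).card + Z.card = Y.card :=
      Finset.card_sdiff_add_card_eq_card (Finset.filter_subset _ _)
    have hZe : Z.card ≤ (Z.erase f).card + 1 := by
      have := Finset.pred_card_le_card_erase (s := Z) (a := f)
      omega
    have hSe : (S.erase b).card + 1 = S.card := Finset.card_erase_add_one hbS
    have hchoose : S.card.choose 2 = (S.erase b).card + (S.erase b).card.choose 2 := by
      rw [← hSe, Nat.choose_succ_succ' _ 1, Nat.choose_one_right]
    omega
  · push Not at hfull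
    refine le_trans (hX.card_le_choose hG hb Y (fun e he => (hYX e).1 he) S ?_ ?_ ?_)
      (Nat.le_succ _)
    · exact fun e _ a c ha _ _ => (hmS a).2 ha
    · exact fun a ha => (hmS a).1 ha
    · intro f hf b hbS hall
      obtain ⟨t, h1, h2, h3⟩ := hfull f hf b hbS
      exact h3 (hall t h1 h2)

end SimpleGraph

/-- If `G` is a finite connected block graph, then
`gp_e(G) ≤ C(s(G), 2) + 1`, where `s(G)` is the number of simplicial vertices of `G`. -/
theorem egp_le_choose_simplicial {V : Type*} [Fintype V] (G : SimpleGraph V)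
    (hG : G.Connected) (hb : G.IsBlockGraph) :
    G.egp ≤ ({v : V | G.IsSimplicialVertex v}.ncard).choose 2 + 1 := by
  refine csSup_le' ?_
  rintro n ⟨X, hX, rfl⟩
  exact hX.ncard_le hG hb
end
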